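/- For every real J with 0 < J < 1, the hypergeometric Wronskian identity F(J)·F*(J) + 3J·(F(J)·(F*)′(J) − F′(J)·F*(J)) = (1−J)^{−1/2} holds, where F(J) = ₂F₁(1/12, 1/12; 2/3; J), F*(J) = ₂F₁(5/12, 5/12; 4/3; J), and ′ denotes differentiation with respect to J. -/

import Mathlib

noncomputable section

/-- Rising factorial (Pochhammer symbol) `(a)_n = a(a+1)⋯(a+n-1)`. -/
def poch (a : ℝ) (n : ℕ) : ℝ := ∏ i ∈ Finset.range n, (a + (i : ℝ))

/-- The Gauss hypergeometric series `F(a,b;c;x) = Σ_{k≥0} (a)_k (b)_k / ((c)_k k!) xᵏ`. -/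
def hyp (a b c x : ℝ) : ℝ :=
  ∑' k : ℕ, poch a k * poch b k / (poch c k * (Nat.factorial k : ℝ)) * x ^ k

/-- Coefficients with polynomial growth. -/
def PolyBd (u : ℕ → ℝ) : Prop := ∃ C : ℝ, ∃ m : ℕ, ∀ k : ℕ, |u k| ≤ C * ((k : ℝ) + 1) ^ m

/-- Coefficients of the derivative. -/
def dcoef (u : ℕ → ℝ) : ℕ → ℝ := fun k => ((k : ℝ) + 1) * u (k + 1)

lemma PolyBd.dcoef {u : ℕ → ℝ} (h : PolyBd u) : PolyBd (dcoef u) := by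
  obtain ⟨C, m, h⟩ := h
  refine ⟨C * 2 ^ m, m + 1, fun k => ?_⟩
  have hC : 0 ≤ C := by
    have := (abs_nonneg _).trans (h 0)
    simpa using this
  have h1 := h (k + 1)
  have hk : (0 : ℝ) ≤ k := Nat.cast_nonneg k
  push_cast at h1
  have h2 : ((k : ℝ) + 1 + 1) ^ m ≤ (2 * ((k : ℝ) + 1)) ^ m := by
    gcongr
    linarith
  unfold _root_.dcoef
  rw [abs_mul, abs_of_nonneg (by positivity : (0 : ℝ) ≤ (k : ℝ) + 1)]
  calc ((k : ℝ) + 1) * |u (k + 1)| ≤ ((k : ℝ) + 1) * (C * (2 * ((k : ℝ) + 1)) ^ m) := by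
        gcongr
        exact h1.trans (by gcongr)
    _ = C * 2 ^ m * ((k : ℝ) + 1) ^ (m + 1) := by rw [mul_pow]; ring

lemma PolyBd.summable_abs {u : ℕ → ℝ} (h : PolyBd u) {r : ℝ} (h0 : 0 ≤ r) (h1 : r < 1) :
    Summable (fun k => |u k| * r ^ k) := by
  obtain ⟨C, m, h⟩ := h
  have hs : Summable (fun k : ℕ => C * (((k : ℝ) + 1) ^ m * r ^ k)) := by
    apply Summable.mul_left
    rcases h0.eq_or_lt with rfl | h0
    · apply summable_of_ne_finset_zero (s := {0})
      intro b hb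
      simp at hb
      simp [hb]
    · have := (summable_nat_add_iff 1).2 (summable_pow_mul_geometric_of_norm_lt_one (R := ℝ) m
        (r := r) (by rwa [Real.norm_eq_abs, abs_of_pos h0]))
      have := this.mul_left r⁻¹
      refine this.congr fun k => ?_
      push_cast
      rw [pow_succ]
      field_simp
  refine Summable.of_nonneg_of_le (fun k => by positivity) (fun k => ?_) hs
  rw [← mul_assoc]
  gcongr
  exact h k

lemma PolyBd.summable {u : ℕ → ℝ} (h : PolyBd u) {x : ℝ} (hx : |x| < 1) :
    Summable (fun k => u k * x ^ k) := by
  apply Summable.of_abs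
  simpa [abs_mul, abs_pow] using h.summable_abs (abs_nonneg x) hx

lemma PolyBd.hasDerivAt {u : ℕ → ℝ} (h : PolyBd u) {x : ℝ} (hx : |x| < 1) :
    HasDerivAt (fun y => ∑' k, u k * y ^ k) (∑' k, _root_.dcoef u k * x ^ k) x := by
  obtain ⟨r, hr, hr1⟩ := exists_between hx
  have hr0 : 0 ≤ r := (abs_nonneg x).trans hr.le
  have hS : Summable (fun k : ℕ => |u k| * (k * r ^ (k - 1))) := by
    rw [← summable_nat_add_iff 1]
    refine (h.dcoef.summable_abs hr0 hr1).congr fun k => ?_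
    unfold _root_.dcoef
    rw [abs_mul, abs_of_nonneg (by positivity : (0 : ℝ) ≤ (k : ℝ) + 1)]
    rw [Nat.add_sub_cancel]
    push_cast
    ring
  have key := hasDerivAt_tsum_of_isPreconnected (t := Metric.ball (0 : ℝ) r)
    (g := fun k y => u k * y ^ k) (g' := fun k y => u k * (k * y ^ (k - 1))) (y₀ := x) (y := x)
    hS Metric.isOpen_ball (convex_ball (0 : ℝ) r).isPreconnected
    (fun k y _ => (hasDerivAt_pow k y).const_mul (u k))
    (fun k y hy => by
      have hy' : |y| < r := by simpa using hy
      rw [Real.norm_eq_abs, abs_mul, abs_mul, abs_pow, Nat.abs_cast]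
      gcongr)
    (by simpa using hr) (h.summable hx) (by simpa using hr)
  refine HasDerivAt.congr_deriv (f := fun y => ∑' k, u k * y ^ k) key ?_
  have hs2 : Summable (fun k : ℕ => u k * (k * x ^ (k - 1))) := by
    rw [← summable_nat_add_iff 1]
    refine (h.dcoef.summable hx).congr fun k => ?_
    unfold _root_.dcoef
    rw [Nat.add_sub_cancel]
    push_cast
    ring
  rw [hs2.tsum_eq_zero_add]
  simp only [_root_.dcoef]
  push_cast
  simp
  congr 1
  ext k
  ring

lemma hasSum_theta {w : ℕ → ℝ} {x S : ℝ}
    (h : HasSum (fun k : ℕ => ((k : ℝ) + 1) * w (k + 1) * x ^ k) S) :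
    HasSum (fun k : ℕ => (k : ℝ) * w k * x ^ k) (x * S) := by
  have h2 := h.mul_left x
  rw [← hasSum_nat_add_iff' 1]
  simp
  refine h2.congr_fun ?_ |> fun h => h
  all_goals
    intro k
    ring

/-- hypergeometric coefficients -/
def hc (a b c : ℝ) (k : ℕ) : ℝ := poch a k * poch b k / (poch c k * (Nat.factorial k : ℝ))

lemma poch_pos {a : ℝ} (h : 0 < a) (k : ℕ) : 0 < poch a k :=
  Finset.prod_pos fun i _ => by positivity

lemma hc_succ {a b c : ℝ} (hc0 : 0 < c) (k : ℕ) :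
    ((k : ℝ) + c) * (((k : ℝ) + 1) * hc a b c (k + 1)) = (k + a) * (k + b) * hc a b c k := by
  have h1 := (poch_pos hc0 k).ne'
  have h2 : ((Nat.factorial k : ℕ) : ℝ) ≠ 0 := by positivity
  have h3 : c + (k : ℝ) ≠ 0 := by positivity
  have h4 : (k : ℝ) + 1 ≠ 0 := by positivity
  have e : ∀ t : ℝ, poch t (k + 1) = poch t k * (t + k) := fun t => by
    unfold poch; rw [Finset.prod_range_succ]
  unfold hc
  rw [e a, e b, e c, Nat.factorial_succ]
  push_cast
  field_simp
  ring

lemma hc_polyBd {a b c : ℝ} (ha : 0 < a) (hb : 0 < b) (hac : a ≤ c) (hb1 : b ≤ 1) :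
    PolyBd (hc a b c) := by
  have hc0 : 0 < c := ha.trans_le hac
  have hnn : ∀ k, 0 ≤ hc a b c k := fun k => by
    have := poch_pos ha k
    have := poch_pos hb k
    have := poch_pos hc0 k
    unfold hc; positivity
  refine ⟨1, 0, fun k => ?_⟩
  rw [abs_of_nonneg (hnn k)]
  simp
  induction k with
  | zero => simp [hc, poch]
  | succ k ih =>
    have h := hc_succ (a := a) (b := b) hc0 k
    have hp : 0 < ((k : ℝ) + c) * ((k : ℝ) + 1) := by positivity
    refine le_of_mul_le_mul_left ?_ hp
    rw [mul_assoc, h, mul_one]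
    calc (k + a) * (k + b) * hc a b c k ≤ ((k : ℝ) + c) * ((k : ℝ) + 1) * 1 := by
          gcongr
          exact hnn k
      _ = _ := by ring

lemma hyp_ode {a b c : ℝ} (ha : 0 < a) (hb : 0 < b) (hac : a ≤ c) (hb1 : b ≤ 1) :
    ∃ F1 F2 : ℝ → ℝ, (∀ x, |x| < 1 → HasDerivAt (hyp a b c) (F1 x) x) ∧
      (∀ x, |x| < 1 → HasDerivAt F1 (F2 x) x) ∧
      ∀ x, |x| < 1 → x * F2 x + c * F1 x = x * (x * F2 x) + (a + b + 1) * (x * F1 x)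
        + a * b * hyp a b c x := by
  have hP := hc_polyBd ha hb hac hb1
  have hc0 : 0 < c := ha.trans_le hac
  refine ⟨fun x => ∑' k, dcoef (hc a b c) k * x ^ k,
    fun x => ∑' k, dcoef (dcoef (hc a b c)) k * x ^ k, fun x hx => hP.hasDerivAt hx,
    fun x hx => hP.dcoef.hasDerivAt hx, fun x hx => ?_⟩
  set u := hc a b c with hu
  have s0 : HasSum (fun k => u k * x ^ k) (hyp a b c x) := (hP.summable hx).hasSum
  have s1 := (hP.dcoef.summable hx).hasSum
  have s2 := (hP.dcoef.dcoef.summable hx).hasSum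
  dsimp only
  set S1 := ∑' k, dcoef u k * x ^ k
  set S2 := ∑' k, dcoef (dcoef u) k * x ^ k
  have t1 : HasSum (fun k : ℕ => (k : ℝ) * u k * x ^ k) (x * S1) := hasSum_theta s1
  have t2 : HasSum (fun k : ℕ => (k : ℝ) * dcoef u k * x ^ k) (x * S2) := hasSum_theta s2
  have t3 : HasSum (fun k : ℕ => (k : ℝ) * (((k : ℝ) - 1) * u k) * x ^ k) (x * (x * S2)) := by
    apply hasSum_theta (w := fun k : ℕ => ((k : ℝ) - 1) * u k)
    convert t2 using 2 with k
    unfold dcoef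
    push_cast
    ring
  have L := t2.add (s1.mul_left c)
  have R := (t3.add (t1.mul_left (a + b + 1))).add (s0.mul_left (a * b))
  refine L.unique ?_
  convert R using 2 with k
  have := hc_succ (a := a) (b := b) hc0 k
  rw [← hu] at this
  unfold dcoef
  linear_combination x ^ k * this

lemma hyp_zero (a b c : ℝ) : hyp a b c 0 = 1 := by
  unfold hyp
  rw [tsum_eq_single 0]
  · simp [poch]
  · intro k hk
    simp [hk]

theorem hypergeometric_wronskian (J : ℝ) (h0 : 0 < J) (h1 : J < 1) :
    hyp (1/12) (1/12) (2/3) J * hyp (5/12) (5/12) (4/3) J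
      + 3 * J * (hyp (1/12) (1/12) (2/3) J * deriv (fun s => hyp (5/12) (5/12) (4/3) s) J
          - deriv (fun s => hyp (1/12) (1/12) (2/3) s) J * hyp (5/12) (5/12) (4/3) J)
    = (1 - J) ^ (-(1:ℝ)/2) := by
  obtain ⟨F1, F2, hF1, hF2, hF⟩ := hyp_ode (a := 1/12) (b := 1/12) (c := 2/3)
    (by norm_num) (by norm_num) (by norm_num) (by norm_num)
  obtain ⟨E1, E2, hE1, hE2, hE⟩ := hyp_ode (a := 5/12) (b := 5/12) (c := 4/3)
    (by norm_num) (by norm_num) (by norm_num) (by norm_num)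
  set F := hyp (1/12) (1/12) (2/3) with hFd
  set E := hyp (5/12) (5/12) (4/3) with hEd
  have hJ : |J| < 1 := by rw [abs_of_pos h0]; exact h1
  change F J * E J + 3 * J * (F J * deriv E J - deriv F J * E J) = _
  rw [(hE1 J hJ).deriv, (hF1 J hJ).deriv]
  let G : ℝ → ℝ := fun x => (F x * E x + 3 * x * (F x * E1 x - F1 x * E x)) * (1 - x) ^ ((1:ℝ)/2)
  have hG : ∀ x, |x| < 1 → HasDerivAt G 0 x := by
    intro x hx
    have hx1 : 0 < 1 - x := by linarith [(abs_lt.1 hx).2]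
    have a1 := ((hF1 x hx).mul (hE1 x hx)).add
      (((hasDerivAt_id x).const_mul 3).mul
        (((hF1 x hx).mul (hE2 x hx)).sub ((hF2 x hx).mul (hE1 x hx))))
    have a2 := ((hasDerivAt_id x).const_sub 1).rpow_const (p := (1:ℝ)/2) (Or.inl hx1.ne')
    have a3 := a1.mul a2
    refine HasDerivAt.congr_deriv (f := G) a3 ?_
    have e : (1 - x) ^ ((1:ℝ)/2) = (1 - x) * (1 - x) ^ ((1:ℝ)/2 - 1) := by
      rw [Real.rpow_sub_one hx1.ne']
      field_simp
    simp only [id, Pi.mul_apply, Pi.add_apply, Pi.sub_apply]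
    rw [e]
    have f := hF x hx
    have g := hE x hx
    linear_combination (1 - x) ^ ((1:ℝ)/2 - 1) * (3 * F x * g - 3 * E x * f)
  have hconst : G J = G 0 := by
    have := (convex_ball (0:ℝ) 1).is_const_of_fderivWithin_eq_zero (𝕜 := ℝ) (f := G)
      (x := J) (y := 0)
      (fun x hx => (hG x (by simpa using hx)).differentiableAt.differentiableWithinAt)
      (fun x hx => by
        rw [fderivWithin_of_isOpen Metric.isOpen_ball hx]
        have := (hG x (by simpa using hx)).hasFDerivAt.fderiv
        rw [this]
        ext
        simp)
      (by simpa using hJ) (by simp)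
    exact this
  have hG0 : G 0 = 1 := by
    simp [G, hFd, hEd, hyp_zero]
  rw [hG0] at hconst
  have hp : 0 < 1 - J := by linarith
  rw [neg_div, Real.rpow_neg hp.le]
  exact eq_inv_of_mul_eq_one_left hconst
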